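/- arXiv:1808.09750 — 6 statements merged into one kernel-verified Lean document; each statement's English description precedes it below -/
import Mathlib

section
/- Let L be a field of characteristic zero and let s ∈ L be a nonzero element. Suppose μ : L[X,Y] → L is an L-linear map such that for every polynomial P ∈ L[X,Y] one has μ(P(X+1, Y+1)) = μ(P(X,Y)) and μ(P(X+s, Y−s)) = μ(P(X,Y)). Then μ(P) = 0 for every polynomial P ∈ L[X,Y]. -/
/-!
Put `U = X + Y`. The substitution `(X, Y) ↦ (X + s, Y - s)` fixes `U` and sends `X` to `X + s`, so
invariance gives `μ (U ^ a * ((X + s) ^ (b + 1) - X ^ (b + 1))) = 0`. The leading term in `X` is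
`(b + 1) * s * U ^ a * X ^ b`, with a nonzero coefficient in characteristic zero, so strong
induction on `b` yields `μ (U ^ a * X ^ b) = 0` (`mu_monomial_eq_zero`). Since `X, U` generate the
polynomial ring, these elements span it.
-/

open MvPolynomial

/-- Vanishing on the basis `(X + Y) ^ a * X ^ b`. -/
lemma mu_monomial_eq_zero {L : Type*} [Field L] [CharZero L] (s : L) (hs : s ≠ 0)
    (μ : MvPolynomial (Fin 2) L →ₗ[L] L)
    (h2 : ∀ P : MvPolynomial (Fin 2) L,
      μ (aeval ![X 0 + C s, X 1 - C s] P) = μ P) (a b : ℕ) :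
    μ ((X 0 + X 1) ^ a * X 0 ^ b) = 0 := by
  induction b using Nat.strong_induction_on with
  | _ b ih =>
    have h := h2 ((X 0 + X 1) ^ a * X 0 ^ (b + 1))
    have e : aeval ![X 0 + C s, X 1 - C s]
        ((X 0 + X 1) ^ a * X 0 ^ (b + 1) : MvPolynomial (Fin 2) L)
        = ∑ m ∈ Finset.range (b + 2), (s ^ (b + 1 - m) * ((b + 1).choose m : L)) •
          ((X 0 + X 1) ^ a * X 0 ^ m : MvPolynomial (Fin 2) L) := by
      simp only [map_mul, map_pow, map_add, aeval_X, Matrix.cons_val_zero, Matrix.cons_val_one]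
      rw [add_pow (X 0) (C s) (b + 1), Finset.mul_sum]
      refine Finset.sum_congr rfl fun m _ => ?_
      simp only [smul_eq_C_mul, map_mul, map_pow, map_natCast]
      ring
    -- The top term cancels against `μ P`; the terms of index below `b` vanish by induction.
    rw [e, map_sum, Finset.sum_range_succ, Finset.sum_range_succ,
      Finset.sum_eq_zero fun m hm => by
        rw [map_smul, ih m (Finset.mem_range.mp hm), smul_zero]] at h
    have hb : (b : L) + 1 ≠ 0 := by exact_mod_cast b.succ_ne_zero
    simpa [hs, hb] using h

/-- If `μ` is an `L`-linear functional on the polynomial ring `L[X,Y]` (char 0) invariant under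
the substitutions `(X,Y) ↦ (X+1, Y+1)` and `(X,Y) ↦ (X+s, Y-s)` for some nonzero `s`,
then `μ` vanishes on all polynomials. -/
theorem stmt0 {L : Type*} [Field L] [CharZero L] (s : L) (hs : s ≠ 0)
    (μ : MvPolynomial (Fin 2) L →ₗ[L] L)
    (h1 : ∀ P : MvPolynomial (Fin 2) L,
      μ (aeval ![X 0 + C 1, X 1 + C 1] P) = μ P)
    (h2 : ∀ P : MvPolynomial (Fin 2) L,
      μ (aeval ![X 0 + C s, X 1 - C s] P) = μ P) :
    ∀ P : MvPolynomial (Fin 2) L, μ P = 0 := by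
  intro P
  have key : ∀ Q : MvPolynomial (Fin 2) L, μ (aeval ![X 0, X 0 + X 1] Q) = 0 := by
    intro Q
    induction Q using MvPolynomial.induction_on' with
    | monomial u c =>
      have e : aeval ![X 0, X 0 + X 1] (monomial u c)
          = c • ((X 0 + X 1) ^ u 1 * X 0 ^ u 0 : MvPolynomial (Fin 2) L) := by
        rw [aeval_monomial, Finsupp.prod_fintype _ _ (by simp), Fin.prod_univ_two, smul_eq_C_mul]
        simp [algebraMap_eq, mul_comm]
      rw [e, map_smul, mu_monomial_eq_zero s hs μ h2, smul_zero]
    | add p q hp hq => rw [map_add, map_add, hp, hq, add_zero]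
  -- Express `P` as a polynomial in `X` and `X + Y` by substituting `Y = (X + Y) - X`.
  have hP : (aeval ![X 0, X 0 + X 1] : MvPolynomial (Fin 2) L →ₐ[L] MvPolynomial (Fin 2) L).comp
      (aeval ![X 0, X 1 - X 0]) = AlgHom.id L _ := by
    ext i : 1
    fin_cases i <;> simp
  have := key (aeval ![X 0, X 1 - X 0] P)
  rwa [← AlgHom.comp_apply, hP] at this
end

section
/- Let K be an imaginary quadratic field with ring of integers O_K, let L be a field of characteristic zero, and let σ, τ : K → L be two distinct ring homomorphisms. Suppose μ : L[X,Y] → L is an L-linear map such that μ(P(X+σ(b), Y+τ(b))) = μ(P(X,Y)) for every b ∈ O_K and every polynomial P ∈ L[X,Y]. Then μ(P) = 0 for every polynomial P ∈ L[X,Y]. -/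
/-!
Only the translation by `b = 1` is needed. It sends `X ↦ X + 1`, `Y ↦ Y + 1`, so it fixes
`Z = Y - X`, and `L[X,Y]` is spanned by the products `X ^ n * Z ^ k`. In characteristic zero the
operator `P ↦ P(X+1, Y+1) - P` is surjective: on `X ^ (n+1) * Z ^ k` it gives
`(n+1) * X ^ n * Z ^ k` plus terms of lower degree in `X`, so by strong induction on `n` an invariant
functional kills all these products (`map_X_pow_mul_eq_zero`).
-/

open MvPolynomial

/-- A functional invariant under an endomorphism with `x ↦ x + 1` kills `x ^ n * q` for every
fixed element `q`. -/
lemma map_X_pow_mul_eq_zero {L A : Type*} [Field L] [CharZero L] [CommRing A] [Algebra L A]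
    (μ : A →ₗ[L] L) (φ : A →ₐ[L] A) (hμ : ∀ P, μ (φ P) = μ P) (x q : A)
    (hx : φ x = x + 1) (hq : φ q = q) (n : ℕ) : μ (x ^ n * q) = 0 := by
  induction n using Nat.strong_induction_on with
  | _ n ih =>
    have h1 := hμ (x ^ (n + 1) * q)
    have h2 : φ (x ^ (n + 1) * q) =
        (∑ k ∈ Finset.range n, ((n + 1).choose k : L) • (x ^ k * q))
          + ((n + 1 : ℕ) : L) • (x ^ n * q) + x ^ (n + 1) * q := by
      rw [map_mul, map_pow, hx, hq, add_pow, Finset.sum_range_succ, Finset.sum_range_succ,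
        add_mul, add_mul, Finset.sum_mul]
      simp only [one_pow, mul_one, Nat.choose_self, Nat.cast_one, Nat.choose_succ_self_right,
        Algebra.smul_def, map_natCast]
      congr 1
      congr 1
      · exact Finset.sum_congr rfl fun k _ => by ring
      · ring
    rw [h2, map_add, map_add, map_sum, Finset.sum_eq_zero, zero_add, add_eq_right, map_smul,
      smul_eq_mul] at h1
    · exact (mul_eq_zero.mp h1).resolve_left (Nat.cast_ne_zero.mpr n.succ_ne_zero)
    · intro k hk
      rw [map_smul, ih k (Finset.mem_range.mp hk), smul_zero]

/-- Let `K` be an imaginary quadratic field with ring of integers `O_K`, `L` a field of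
characteristic zero, and `σ ≠ τ : K → L` two ring homomorphisms.  If an `L`-linear functional
`μ` on `L[X,Y]` is invariant under all the substitutions `(X,Y) ↦ (X + σ(b), Y + τ(b))` for
`b ∈ O_K`, then `μ` vanishes on all polynomials. -/
theorem stmt1 {K : Type*} [Field K] [NumberField K]
    (hdeg : Module.finrank ℚ K = 2) (himag : IsEmpty (K →+* ℝ))
    {L : Type*} [Field L] [CharZero L]
    (σ τ : K →+* L) (hστ : σ ≠ τ)
    (μ : MvPolynomial (Fin 2) L →ₗ[L] L)
    (h : ∀ (b : NumberField.RingOfIntegers K) (P : MvPolynomial (Fin 2) L),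
      μ (aeval ![X 0 + C (σ (algebraMap (NumberField.RingOfIntegers K) K b)),
                 X 1 + C (τ (algebraMap (NumberField.RingOfIntegers K) K b))] P) = μ P) :
    ∀ P : MvPolynomial (Fin 2) L, μ P = 0 := by
  intro P
  set φ : MvPolynomial (Fin 2) L →ₐ[L] MvPolynomial (Fin 2) L :=
    aeval ![X 0 + 1, X 1 + 1] with hφ
  have hμ : ∀ P, μ (φ P) = μ P := fun P => by simpa [hφ] using h 1 P
  have key : ∀ n k : ℕ, μ (X 0 ^ n * (X 1 - X 0) ^ k) = 0 := fun n k =>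
    map_X_pow_mul_eq_zero μ φ hμ _ _ (by simp [hφ]) (by simp [hφ]) n
  induction P using MvPolynomial.induction_on' with
  | add p q hp hq => rw [map_add, hp, hq, add_zero]
  | monomial s a =>
    -- expand `Y ^ m = ((Y - X) + X) ^ m`
    have hs : monomial s a = ∑ k ∈ Finset.range (s 1 + 1), (a * ((s 1).choose k : L)) •
        ((X 0 : MvPolynomial (Fin 2) L) ^ (s 0 + (s 1 - k)) * (X 1 - X 0) ^ k) := by
      have hY : (X 1 : MvPolynomial (Fin 2) L) ^ s 1 = ((X 1 - X 0) + X 0) ^ s 1 := by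
        rw [sub_add_cancel]
      rw [monomial_eq, Finsupp.prod_fintype _ _ (fun _ => pow_zero _), Fin.prod_univ_two, hY,
        add_pow, Finset.mul_sum, Finset.mul_sum]
      refine Finset.sum_congr rfl fun k _ => ?_
      rw [smul_eq_C_mul, C_mul, map_natCast, pow_add]
      ring
    rw [hs, map_sum]
    exact Finset.sum_eq_zero fun k _ => by rw [map_smul, key, smul_zero]
end

section
/- Let A be a commutative local ring with maximal ideal m in which 2 is a unit, let d ≥ 1, and let π : GL_d(A) → GL_d(A/m) denote the reduction homomorphism. Suppose C, C' ∈ GL_d(A) satisfy C² = 1, C'² = 1 and π(C) = π(C'). Then there exists u ∈ GL_d(A) with π(u) = 1 such that u C u⁻¹ = C'. -/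
/-!
The conjugating matrix is `u = (1 + C' C) / 2`. Since `C² = C'² = 1`, both `u C` and `C' u` equal
`(C + C') / 2`. Modulo the maximal ideal `C' C` becomes `C² = 1`, so `u` reduces to the identity;
hence `det u` reduces to `1` and is a unit because `A` is local.
-/

/-- Let `A` be a commutative local ring in which 2 is a unit and let
`π : GL_d(A) → GL_d(A/m)` be the reduction modulo the maximal ideal.  Any two involutions
`C, C' ∈ GL_d(A)` with the same reduction are conjugate by a matrix `u` with `π(u) = 1`. -/
theorem stmt3 {A : Type*} [CommRing A] [IsLocalRing A] (h2 : IsUnit (2 : A))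
    (d : ℕ) (hd : 1 ≤ d)
    (C C' : GL (Fin d) A) (hC : C ^ 2 = 1) (hC' : C' ^ 2 = 1)
    (hred : Matrix.GeneralLinearGroup.map (IsLocalRing.residue A) C =
        Matrix.GeneralLinearGroup.map (IsLocalRing.residue A) C') :
    ∃ u : GL (Fin d) A,
      Matrix.GeneralLinearGroup.map (IsLocalRing.residue A) u = 1 ∧
      u * C * u⁻¹ = C' := by
  obtain ⟨b, hb⟩ := h2.exists_left_inv
  have hCC : (C : Matrix (Fin d) (Fin d) A) * C = 1 := by
    rw [← Units.val_mul, ← sq, hC, Units.val_one]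
  have hCC' : (C' : Matrix (Fin d) (Fin d) A) * C' = 1 := by
    rw [← Units.val_mul, ← sq, hC', Units.val_one]
  -- The average over the group of order 2 of `ρ'(g) * ρ(g)⁻¹`, where the generator acts by `C` under
  -- `ρ` and by `C'` under `ρ'`; note `C⁻¹ = C`.
  let v : Matrix (Fin d) (Fin d) A := b • (1 + (C' : Matrix (Fin d) (Fin d) A) * C)
  have hvC : v * C = C' * v := by
    simp only [v, smul_mul_assoc, mul_smul_comm, add_mul, mul_add, one_mul, mul_one, mul_assoc, hCC]
    rw [← mul_assoc, hCC', one_mul, add_comm]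
  have hv : (IsLocalRing.residue A).mapMatrix v = 1 := by
    have hr : (IsLocalRing.residue A).mapMatrix (C : Matrix (Fin d) (Fin d) A) =
        (IsLocalRing.residue A).mapMatrix (C' : Matrix (Fin d) (Fin d) A) :=
      congrArg Units.val hred
    have hv' : v = Matrix.scalar (Fin d) b * (1 + (C' : Matrix (Fin d) (Fin d) A) * C) := by
      simp only [v, Matrix.smul_eq_diagonal_mul, Matrix.scalar_apply]
    have hs : Matrix.scalar (Fin d) b * (1 + 1) = 1 := by
      rw [← map_one (Matrix.scalar (Fin d)), ← map_add, ← map_mul, one_add_one_eq_two, hb]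
    rw [hv', map_mul, map_add, map_mul, ← hr, ← map_mul, hCC, ← map_add, ← map_mul, hs, map_one]
  have hdet : IsUnit v.det := by
    refine isUnit_of_map_unit (IsLocalRing.residue A) _ ?_
    rw [RingHom.map_det, hv, Matrix.det_one]
    exact isUnit_one
  obtain ⟨u, hu⟩ := (Matrix.isUnit_iff_isUnit_det v).2 hdet
  refine ⟨u, Units.ext ?_, ?_⟩
  · change (IsLocalRing.residue A).mapMatrix (u : Matrix (Fin d) (Fin d) A) = 1
    rw [hu, hv]
  · rw [mul_inv_eq_iff_eq_mul]
    exact Units.ext (by rw [Units.val_mul, Units.val_mul, hu, hvC])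
end

section
/- Let L be a field of characteristic different from 2, and let A be a commutative Artinian local L-algebra with maximal ideal m_A such that the composite L → A → A/m_A is an isomorphism; write π : GL_d(A) → GL_d(L) for the induced reduction homomorphism and regard GL_d(L) inside GL_d(A) via the algebra map L → A. Let G be a group, H ⊆ G a subgroup of index 2, and c ∈ G ∖ H with c² = 1. Let ρ : G → GL_d(L) be a group homomorphism, and let ρ̃ : H → GL_d(A) be a group homomorphism with π ∘ ρ̃ = ρ|_H. Then the following are equivalent: (i) there exist u ∈ GL_d(A) with π(u) = 1 and a group homomorphism ρ̃^G : G → GL_d(A) with π ∘ ρ̃^G = ρ and ρ̃^G(h) = u ρ̃(h) u⁻¹ for all h ∈ H; (ii) there exists u ∈ GL_d(A) with π(u) = 1 such that ρ(c) · (u ρ̃(c h c) u⁻¹) · ρ(c) = u ρ̃(h) u⁻¹ for all h ∈ H. -/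
/-!
Write `C` for `ρ c` viewed in `GL_d(A)`.

If an extension `ρG` of `u ρt u⁻¹` exists, then `T = ρG c` is an involution with the same reduction
as `C`. The matrix `v = (1 + C T) / 2` satisfies `C v = v T` and reduces to `1`; it is invertible
because `A` is local, so `v T v⁻¹ = C` (`exists_conj_of_involutions`). Conjugating `ρG` by `v`
gives an extension sending `c` to `C`, whose restriction to `H` is therefore fixed by the twist.

Conversely, if `R = u ρt u⁻¹` is fixed by the twist, then `c ↦ C` together with `R` defines a
homomorphism on `G = H ⊔ H c` (`exists_extension_of_index_two`).
-/

/-- A homomorphism on an index-two subgroup `H`, complemented by an involution `c`, extends to the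
whole group with `c ↦ C` as soon as `C` is an involution acting on the image as `c` acts on `H`. -/
lemma exists_extension_of_index_two {G M : Type*} [Group G] [Group M] (H : Subgroup G)
    (hind : H.index = 2) (c : G) (hc : c ∉ H) (hc2 : c * c = 1)
    (conj : H → H) (hconj : ∀ h : H, ((conj h : H) : G) = c * h * c)
    (R : H →* M) (C : M) (hC : C * C = 1) (hR : ∀ h : H, C * R (conj h) * C = R h) :
    ∃ F : G →* M, (∀ h : H, F h = R h) ∧ F c = C := by
  classical
  have hm : ∀ {a b : G}, a * b ∈ H ↔ (a ∈ H ↔ b ∈ H) := Subgroup.mul_mem_iff_of_index_two hind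
  have hgc : ∀ {g : G}, g ∉ H → g * c ∈ H := fun hg => hm.2 (iff_of_false hg hc)
  have hR' : ∀ h : H, C * R h = R (conj h) * C := fun h => by
    rw [← hR h, ← mul_assoc, ← mul_assoc, hC, one_mul]
  have hcc : ∀ x : G, c * (c * x) = x := fun x => by rw [← mul_assoc, hc2, one_mul]
  let f : G → M := fun g => if h : g ∈ H then R ⟨g, h⟩ else R ⟨g * c, hgc h⟩ * C
  have f_in : ∀ {g : G} (h : g ∈ H), f g = R ⟨g, h⟩ := fun h => dif_pos h
  have f_out : ∀ {g : G} (h : g ∉ H), f g = R ⟨g * c, hgc h⟩ * C := fun h => dif_neg h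
  have fmul : ∀ a b : G, f (a * b) = f a * f b := by
    intro a b
    by_cases ha : a ∈ H <;> by_cases hb : b ∈ H
    · rw [f_in ha, f_in hb, f_in (hm.2 (iff_of_true ha hb)), ← map_mul]
      rfl
    · have hab : a * b ∉ H := fun h => hb ((hm.1 h).1 ha)
      rw [f_in ha, f_out hb, f_out hab, ← mul_assoc, ← map_mul]
      congr 2
      exact Subtype.ext (mul_assoc a b c)
    · have hab : a * b ∉ H := fun h => ha ((hm.1 h).2 hb)
      rw [f_out ha, f_in hb, f_out hab, mul_assoc (R _) C, hR', ← mul_assoc, ← map_mul]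
      congr 2
      apply Subtype.ext
      simp [hconj, mul_assoc, hcc]
    · rw [f_out ha, f_out hb, f_in (hm.2 (iff_of_false ha hb)), mul_assoc (R _) C, ← mul_assoc C, hR',
        mul_assoc _ C C, hC, mul_one, ← map_mul]
      congr 1
      apply Subtype.ext
      simp [hconj, mul_assoc, hcc, hc2]
  refine ⟨MonoidHom.mk' f fmul, fun h => f_in h.2, ?_⟩
  have h1 : (⟨c * c, hgc hc⟩ : H) = 1 := Subtype.ext hc2
  change f c = C
  rw [f_out hc, h1, map_one, one_mul]

/-- Two involutions over a local ring `A` with the same reduction are strictly conjugate when `2`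
is invertible, via `v = (1 + C T) / 2`. -/
lemma exists_conj_of_involutions {L A : Type*} [Field L] (hchar : (2 : L) ≠ 0) [CommRing A]
    [IsLocalRing A] [Algebra L A] (π₀ : A →ₐ[L] L) {d : ℕ} (C T : GL (Fin d) A)
    (hC : C * C = 1) (hT : T * T = 1)
    (hCT : Matrix.GeneralLinearGroup.map π₀.toRingHom C =
      Matrix.GeneralLinearGroup.map π₀.toRingHom T) :
    ∃ v : GL (Fin d) A, Matrix.GeneralLinearGroup.map π₀.toRingHom v = 1 ∧ C * v = v * T := by
  let e : A := algebraMap L A 2⁻¹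
  let V : Matrix (Fin d) (Fin d) A := e • (1 + (C * T : GL (Fin d) A).val)
  have hred : V.map π₀.toRingHom = 1 := by
    have h1 : (C * T : GL (Fin d) A).val.map π₀.toRingHom = 1 := by
      have : Matrix.GeneralLinearGroup.map π₀.toRingHom (C * T) = 1 := by
        rw [map_mul, hCT, ← map_mul, hT, map_one]
      exact congrArg Units.val this
    ext i j
    have h2 := congrFun (congrFun h1 i) j
    rw [Matrix.map_apply] at h2
    have he : π₀.toRingHom e = 2⁻¹ := π₀.commutes 2⁻¹
    simp only [V, Matrix.map_apply, Matrix.smul_apply, Matrix.add_apply, smul_eq_mul, map_mul,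
      map_add, h2, he]
    by_cases hij : i = j
    · subst hij
      simp only [Matrix.one_apply_eq, map_one]
      rw [one_add_one_eq_two, inv_mul_cancel₀ hchar]
    · simp [Matrix.one_apply_ne hij]
  have hdet : IsUnit V.det := by
    have hs : Function.Surjective π₀.toRingHom := fun x => ⟨algebraMap L A x, π₀.commutes x⟩
    have := IsLocalHom.of_surjective π₀.toRingHom hs
    apply isUnit_of_map_unit π₀.toRingHom
    rw [RingHom.map_det, RingHom.mapMatrix_apply, hred, Matrix.det_one]
    exact isUnit_one
  obtain ⟨v, hv⟩ := (Matrix.isUnit_iff_isUnit_det V).2 hdet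
  refine ⟨v, Units.ext ?_, Units.ext ?_⟩
  · change v.val.map π₀.toRingHom = 1
    rw [hv, hred]
  · have h1 : C.val * C.val = 1 := congrArg Units.val hC
    have h2 : T.val * T.val = 1 := congrArg Units.val hT
    rw [Units.val_mul, Units.val_mul, hv]
    simp only [V, Units.val_mul, mul_smul_comm, smul_mul_assoc, mul_add, add_mul, mul_one, one_mul]
    rw [← mul_assoc, h1, mul_assoc, h2, mul_one, one_mul, add_comm]

/-- Appendix Lemma (twisted extension): let `L` be a field with `2 ≠ 0`, `A` an Artinian local
commutative `L`-algebra whose residue field is `L` (witnessed by the `L`-algebra map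
`π₀ : A → L`), `H ≤ G` of index 2, `c ∈ G \ H` with `c² = 1`, `ρ : G → GL_d(L)` and
`ρ̃ : H → GL_d(A)` a lift of `ρ|_H`.  Then the strict equivalence class of `ρ̃` contains a
lift extending to a deformation of `ρ` over `G` if and only if it contains a lift fixed by
the twisting involution `ρ̃ ↦ (h ↦ ρ(c)·ρ̃(chc)·ρ(c))`. -/
theorem stmt4 {L : Type*} [Field L] (hchar : (2 : L) ≠ 0)
    {A : Type*} [CommRing A] [IsArtinianRing A] [IsLocalRing A] [Algebra L A]
    (π₀ : A →ₐ[L] L)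
    {d : ℕ} {G : Type*} [Group G] (H : Subgroup G) (hind : H.index = 2)
    (c : G) (hc : c ∉ H) (hc2 : c ^ 2 = 1)
    (conj : H → H) (hconj : ∀ h : H, ((conj h : H) : G) = c * h * c)
    (ρ : G →* GL (Fin d) L) (ρt : H →* GL (Fin d) A)
    (hlift : ∀ h : H, Matrix.GeneralLinearGroup.map π₀.toRingHom (ρt h) = ρ h) :
    (∃ (u : GL (Fin d) A) (ρG : G →* GL (Fin d) A),
        Matrix.GeneralLinearGroup.map π₀.toRingHom u = 1 ∧
        (∀ g : G, Matrix.GeneralLinearGroup.map π₀.toRingHom (ρG g) = ρ g) ∧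
        ∀ h : H, ρG h = u * ρt h * u⁻¹) ↔
    (∃ u : GL (Fin d) A,
        Matrix.GeneralLinearGroup.map π₀.toRingHom u = 1 ∧
        ∀ h : H,
          Matrix.GeneralLinearGroup.map (algebraMap L A) (ρ c) *
              (u * ρt (conj h) * u⁻¹) *
            Matrix.GeneralLinearGroup.map (algebraMap L A) (ρ c) =
          u * ρt h * u⁻¹) := by
  have hcc : c * c = 1 := by rw [← pow_two, hc2]
  set C : GL (Fin d) A := Matrix.GeneralLinearGroup.map (algebraMap L A) (ρ c) with hCdef
  have hC : C * C = 1 := by rw [hCdef, ← map_mul, ← map_mul, hcc, map_one, map_one]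
  have hCred : Matrix.GeneralLinearGroup.map π₀.toRingHom C = ρ c := by
    ext i j
    exact π₀.commutes _
  constructor
  · rintro ⟨u, ρG, hu, hred, hres⟩
    have hT : ρG c * ρG c = 1 := by rw [← map_mul, hcc, map_one]
    obtain ⟨v, hv, hCv⟩ := exists_conj_of_involutions hchar π₀ C (ρG c) hC hT
      (hCred.trans (hred c).symm)
    refine ⟨v * u, by rw [map_mul, hv, hu, one_mul], fun h => ?_⟩
    have key : ∀ k : H, v * u * ρt k * (v * u)⁻¹ = v * ρG k * v⁻¹ := fun k => by
      rw [hres]; group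
    have hCe : C = v * ρG c * v⁻¹ := by rw [← hCv]; group
    rw [key, key, hCe, hconj]
    have hh : (h : G) = c * (c * h * c) * c := by
      rw [mul_assoc c (h : G) c, ← mul_assoc c c, hcc, one_mul, mul_assoc, hcc, mul_one]
    conv_rhs => rw [hh]
    simp only [map_mul]
    group
  · rintro ⟨u, hu, hfix⟩
    obtain ⟨F, hF, hFc⟩ := exists_extension_of_index_two H hind c hc hcc conj hconj
      ((MulAut.conj u).toMonoidHom.comp ρt) C hC (fun h => hfix h)
    have hFH : ∀ h : H, F h = u * ρt h * u⁻¹ := fun h => hF h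
    have hredH : ∀ h : H, Matrix.GeneralLinearGroup.map π₀.toRingHom (F h) = ρ h := fun h => by
      rw [hFH, map_mul, map_mul, map_inv, hu, hlift, one_mul, inv_one, mul_one]
    refine ⟨u, F, hu, fun g => ?_, hFH⟩
    by_cases hg : g ∈ H
    · exact hredH ⟨g, hg⟩
    · have hgc : g * c ∈ H :=
        (Subgroup.mul_mem_iff_of_index_two hind).2 (iff_of_false hg hc)
      have h1 := hredH ⟨g * c, hgc⟩
      simp only [map_mul, hFc, hCred] at h1
      exact mul_right_cancel h1
end

section
/- Let A be a commutative local ring with maximal ideal m and residue field k = A/m, and let d ≥ 1. Let S ⊆ M_d(A) be a set of matrices whose image under entrywise reduction in M_d(k) generates M_d(k) as a k-algebra. Then the A-subalgebra of M_d(A) generated by S is all of M_d(A); consequently, any matrix T ∈ M_d(A) that commutes with every element of S is scalar, i.e. T = a·I_d for some a ∈ A. -/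
/-!
The proof is Nakayama's lemma. Every element of the `k`-algebra generated by the reduction of `S`
lifts to the `A`-algebra `B` generated by `S` (`exists_lift_of_mem_adjoin`), because scalars lift
along `A → k`. Hence every matrix over `A` is congruent to an element of `B` modulo `m • M_d(A)`
(`mem_smul_top_of_mapMatrix_eq_zero`), i.e. `M_d(A) = B + m • M_d(A)`. Since `M_d(A)` is a finite
`A`-module, `B = M_d(A)`. A matrix commuting with `S` then commutes with all of `M_d(A)`, so it is
central, hence scalar.
-/

theorem exists_lift_of_mem_adjoin {A : Type*} [CommRing A] [IsLocalRing A] {d : ℕ}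
    (S : Set (Matrix (Fin d) (Fin d) A))
    {x : Matrix (Fin d) (Fin d) (IsLocalRing.ResidueField A)}
    (hx : x ∈ Algebra.adjoin (IsLocalRing.ResidueField A)
        ((fun M : Matrix (Fin d) (Fin d) A => (IsLocalRing.residue A).mapMatrix M) '' S)) :
    ∃ b ∈ Algebra.adjoin A S, (IsLocalRing.residue A).mapMatrix b = x := by
  induction hx using Algebra.adjoin_induction with
  | mem x hx =>
    obtain ⟨s, hs, rfl⟩ := hx
    exact ⟨s, Algebra.subset_adjoin hs, rfl⟩
  | algebraMap r =>
    obtain ⟨a, rfl⟩ := IsLocalRing.residue_surjective r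
    refine ⟨algebraMap A _ a, Subalgebra.algebraMap_mem _ a, ?_⟩
    ext i j
    simp [Matrix.algebraMap_matrix_apply, apply_ite (IsLocalRing.residue A)]
  | add x y _ _ hx hy =>
    obtain ⟨b, hb, rfl⟩ := hx
    obtain ⟨c, hc, rfl⟩ := hy
    exact ⟨b + c, add_mem hb hc, map_add _ _ _⟩
  | mul x y _ _ hx hy =>
    obtain ⟨b, hb, rfl⟩ := hx
    obtain ⟨c, hc, rfl⟩ := hy
    exact ⟨b * c, mul_mem hb hc, map_mul _ _ _⟩

theorem mem_smul_top_of_mapMatrix_eq_zero {A : Type*} [CommRing A] [IsLocalRing A] {d : ℕ}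
    {M : Matrix (Fin d) (Fin d) A} (hM : (IsLocalRing.residue A).mapMatrix M = 0) :
    M ∈ IsLocalRing.maximalIdeal A • (⊤ : Submodule A (Matrix (Fin d) (Fin d) A)) := by
  rw [Matrix.matrix_eq_sum_single M]
  refine Submodule.sum_mem _ fun i _ => Submodule.sum_mem _ fun j _ => ?_
  have hij : M i j ∈ IsLocalRing.maximalIdeal A := by
    rw [← IsLocalRing.residue_eq_zero_iff]
    simpa using congrFun (congrFun hM i) j
  rw [← mul_one (M i j), ← smul_eq_mul, ← Matrix.smul_single]
  exact Submodule.smul_mem_smul hij trivial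

/-- Let `A` be a commutative local ring with residue field `k` and let `S ⊆ M_d(A)` be a set
of matrices whose reduction generates `M_d(k)` as a `k`-algebra.  Then `S` generates `M_d(A)`
as an `A`-algebra, and any matrix commuting with every element of `S` is scalar. -/
theorem stmt7 {A : Type*} [CommRing A] [IsLocalRing A] (d : ℕ) (hd : 1 ≤ d)
    (S : Set (Matrix (Fin d) (Fin d) A))
    (hS : Algebra.adjoin (IsLocalRing.ResidueField A)
        ((fun M : Matrix (Fin d) (Fin d) A =>
          (IsLocalRing.residue A).mapMatrix M) '' S) = ⊤) :
    Algebra.adjoin A S = ⊤ ∧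
    ∀ T : Matrix (Fin d) (Fin d) A,
      (∀ s ∈ S, T * s = s * T) → ∃ a : A, T = a • (1 : Matrix (Fin d) (Fin d) A) := by
  have htop : Algebra.adjoin A S = ⊤ := by
    rw [← Algebra.toSubmodule_eq_top, eq_top_iff]
    refine Submodule.le_of_le_smul_of_le_jacobson_bot Module.Finite.fg_top
      (IsLocalRing.maximalIdeal_le_jacobson _) fun M _ => ?_
    obtain ⟨b, hb, hbM⟩ := exists_lift_of_mem_adjoin S
      (x := (IsLocalRing.residue A).mapMatrix M) (hS ▸ Algebra.mem_top)
    rw [← add_sub_cancel b M]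
    refine Submodule.add_mem_sup hb (mem_smul_top_of_mapMatrix_eq_zero ?_)
    rw [map_sub, hbM, sub_self]
  refine ⟨htop, fun T hT => ?_⟩
  have hle : Algebra.adjoin A S ≤ Subalgebra.centralizer A {T} :=
    Algebra.adjoin_le fun s hs => (Subalgebra.mem_centralizer_iff A).mpr <| by
      rintro _ rfl
      exact hT s hs
  have hmem : T ∈ Set.center (Matrix (Fin d) (Fin d) A) := by
    rw [Semigroup.mem_center_iff]
    intro M
    have hM : M ∈ Subalgebra.centralizer A {T} := hle (htop ▸ Algebra.mem_top)
    exact ((Subalgebra.mem_centralizer_iff A).mp hM T rfl).symm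
  rw [Matrix.center_eq_range] at hmem
  obtain ⟨a, rfl⟩ := hmem
  exact ⟨a, by rw [Matrix.smul_one_eq_diagonal, Matrix.scalar_apply]⟩
end

section
/- Let R be a commutative Noetherian ring and M a finitely generated R-module. Suppose that Tor₁^R(M, R/m) = 0 for every maximal ideal m of R. Then M is a projective R-module. -/
/-!
Choose a presentation `0 → K → F → M → 0` with `F` finite free; `K` is finite since `R` is
Noetherian. Vanishing of `Tor₁(M, R/m)` says that `R/m ⊗ K → R/m ⊗ F` is injective
(`lTensor_injective_of_isZero_tor`). As `R/m` is the residue field of `R_m`, the same map is obtained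
by localizing the presentation at `m` and reducing modulo the maximal ideal of `R_m`, so by
Nakayama's lemma (`Module.free_of_lTensor_residueField_injective`) `M_m` is free over `R_m`.
A finitely presented module that is projective at every maximal ideal is projective.
-/

open CategoryTheory TensorProduct

/-- If `P₂ → P₁ → P₀` stays exact at `P₁` after tensoring with `M`, then the inclusion in `P₀`
of the image `L` of `P₁` stays injective: the module `M ⊗ L` is the cokernel of `M ⊗ P₂ → M ⊗ P₁`. -/
lemma lTensor_range_subtype_injective {R : Type*} [CommRing R]
    {M P₂ P₁ P₀ : Type*} [AddCommGroup M] [Module R M] [AddCommGroup P₂] [Module R P₂]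
    [AddCommGroup P₁] [Module R P₁] [AddCommGroup P₀] [Module R P₀]
    (d₂ : P₂ →ₗ[R] P₁) (d₁ : P₁ →ₗ[R] P₀) (hd : d₁ ∘ₗ d₂ = 0)
    (hex : ∀ x, d₁.lTensor M x = 0 → ∃ y, d₂.lTensor M y = x) :
    Function.Injective ((LinearMap.range d₁).subtype.lTensor M) := by
  rw [injective_iff_map_eq_zero]
  intro x hx
  obtain ⟨y, rfl⟩ := d₁.rangeRestrict.lTensor_surjective M d₁.surjective_rangeRestrict x
  rw [← LinearMap.comp_apply, ← LinearMap.lTensor_comp,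
    show (LinearMap.range d₁).subtype ∘ₗ d₁.rangeRestrict = d₁ from rfl] at hx
  obtain ⟨z, rfl⟩ := hex y hx
  have h0 : d₁.rangeRestrict ∘ₗ d₂ = 0 := by
    ext a
    exact LinearMap.congr_fun hd a
  rw [← LinearMap.comp_apply, ← LinearMap.lTensor_comp, h0, LinearMap.lTensor_zero,
    LinearMap.zero_apply]

/-- Balancing of `Tor₁`: although `Tor₁(M, Q)` is computed from a resolution of `Q`, its vanishing
makes `Q ⊗ -` preserve the injection of a presentation of `M`. -/
lemma lTensor_injective_of_isZero_tor {R : Type u} [CommRing R]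
    (M Q : Type u) [AddCommGroup M] [Module R M] [AddCommGroup Q] [Module R Q]
    (htor : Limits.IsZero (((Tor (ModuleCat.{u} R) 1).obj (ModuleCat.of R M)).obj
        (ModuleCat.of R Q)))
    {K F : Type*} [AddCommGroup K] [Module R K] [AddCommGroup F] [Module R F]
    (i : K →ₗ[R] F) (p : F →ₗ[R] M) (hi : Function.Injective i) (hip : Function.Exact i p)
    (hp : Function.Surjective p) :
    Function.Injective (i.lTensor Q) := by
  let P := ProjectiveResolution.of (ModuleCat.of R Q)
  have hz := htor.of_iso (P.isoLeftDerivedObj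
    ((MonoidalCategory.tensoringLeft (ModuleCat.{u} R)).obj (ModuleCat.of R M)) 1).symm
  have hz' := ((HomologicalComplex.exactAt_iff' _ 2 1 0 (by simp) (by simp)).1
    ((HomologicalComplex.exactAt_iff_isZero_homology _ _).2 hz))
  rw [ShortComplex.moduleCat_exact_iff] at hz'
  have hL := lTensor_range_subtype_injective (M := M) (P.complex.d 2 1).hom (P.complex.d 1 0).hom
    (by rw [← ModuleCat.hom_comp, P.complex.d_comp_d]; rfl) (fun x hx ↦ hz' x hx)
  have h0 := (ShortComplex.moduleCat_exact_iff_range_eq_ker _).1 P.exact₀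
  have hsurj : Function.Surjective (P.π.f 0).hom :=
    (ModuleCat.epi_iff_surjective _).1 inferInstance
  have : Module.Projective R (P.complex.X 0) :=
    (IsProjective.iff_projective _).2 (P.projective 0)
  let e : P.complex.X 0 →ₗ[R] Q := (P.π.f 0).hom
  refine lTensor_injective_of_exact_of_exact_of_rTensor_injective
    (f₁ := (LinearMap.range (P.complex.d 1 0).hom).subtype) (f₂ := e) (g₂ := p) ?_ hsurj hip hp
    ((LinearMap.lTensor_inj_iff_rTensor_inj _ _).1 hL)
    (Module.Flat.lTensor_preserves_injective_linearMap _ hi)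
  rw [LinearMap.exact_iff, Submodule.range_subtype]
  exact h0.symm

/-- Reduction of `A ⊗ l` to an `A`-algebra `k` agrees with reduction of `l`. -/
lemma lTensor_baseChange_injective {R A k : Type*} [CommRing R] [CommRing A] [CommRing k]
    [Algebra R A] [Algebra A k] [Algebra R k] [IsScalarTower R A k]
    {K F : Type*} [AddCommGroup K] [Module R K] [AddCommGroup F] [Module R F] (l : K →ₗ[R] F)
    (h : Function.Injective (l.lTensor k)) :
    Function.Injective ((l.baseChange A).lTensor k) := by
  let eK := AlgebraTensorModule.cancelBaseChange R A k k K
  let eF := AlgebraTensorModule.cancelBaseChange R A k k F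
  have hcomm : ∀ x, eF ((l.baseChange A).lTensor k x) = l.lTensor k (eK x) := by
    intro x
    induction x with
    | zero => simp
    | add x y hx hy => simp only [map_add, hx, hy]
    | tmul c y =>
      induction y with
      | zero => simp
      | add x y hx hy => simp only [tmul_add, map_add, hx, hy]
      | tmul a y => simp [eK, eF]
  intro x y hxy
  apply eK.injective
  apply h
  rw [← hcomm, ← hcomm, hxy]

/-- Projectivity criterion: over a commutative Noetherian ring `R`, a finitely generated
module `M` with `Tor₁^R(M, R/m) = 0` for every maximal ideal `m` is projective. -/
theorem stmt10 {R : Type u} [CommRing R] [IsNoetherianRing R]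
    (M : Type u) [AddCommGroup M] [Module R M] [Module.Finite R M]
    (htor : ∀ m : Ideal R, m.IsMaximal →
      Limits.IsZero (((Tor (ModuleCat.{u} R) 1).obj (ModuleCat.of R M)).obj
        (ModuleCat.of R (R ⧸ m)))) :
    Module.Projective R M := by
  have : Module.FinitePresentation R M := Module.finitePresentation_of_finite R M
  obtain ⟨n, p, hp⟩ := Module.Finite.exists_fin' R M
  refine Module.projective_of_localization_maximal' (fun P _ ↦ Localization.AtPrime P)
    (fun P _ ↦ Localization.AtPrime P ⊗[R] M)
    (fun P _ ↦ TensorProduct.mk R (Localization.AtPrime P) M 1) ?_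
  intro m hm
  let i := (LinearMap.ker p).subtype
  have hip : Function.Exact i p := LinearMap.exact_subtype_ker_map p
  have hinj : Function.Injective (i.lTensor (R ⧸ m)) :=
    lTensor_injective_of_isZero_tor M (R ⧸ m) (htor m hm) i p Subtype.val_injective hip hp
  let e : (R ⧸ m) ≃ₗ[R] m.ResidueField := LinearEquiv.ofBijective
    (IsScalarTower.toAlgHom R (R ⧸ m) m.ResidueField).toLinearMap
    m.bijective_algebraMap_quotient_residueField
  have hinj' : Function.Injective (i.lTensor m.ResidueField) := by
    have hc : i.lTensor m.ResidueField ∘ₗ (e.rTensor _).toLinearMap =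
        (e.rTensor _).toLinearMap ∘ₗ i.lTensor (R ⧸ m) := by
      ext; simp
    rw [← (e.rTensor _).injective_comp]
    intro x y hxy
    have hx := LinearMap.congr_fun hc x
    have hy := LinearMap.congr_fun hc y
    exact hinj ((e.rTensor (Fin n → R)).injective (hx.symm.trans (hxy.trans hy)))
  have hfree : Module.Free (Localization.AtPrime m) (Localization.AtPrime m ⊗[R] M) :=
    Module.free_of_lTensor_residueField_injective
      (i.baseChange (Localization.AtPrime m)) (p.baseChange (Localization.AtPrime m))
      (p.lTensor_surjective _ hp) (lTensor_exact _ hip hp)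
      (lTensor_baseChange_injective i hinj')
  infer_instance
end
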